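/- Let F = (f_1, f_2) be a multigerm in ℂ^n (n ≥ 2) both of whose components are regular. Then F is stably A-equivalent to one of the following multigerms: ((t,0),(0,t)), or ((t,0),(t,t^k)) for some integer k ≥ 2. -/

import Mathlib

/-!
Choose a linear functional `l` that is nonzero on both tangent vectors and reparametrize so that
`l (F i t) = t`; the tangent vectors `u`, `v` now satisfy `l u = l v = 1`. It is enough to find an
analytic immersion germ `M : (ℂ², 0) → (ℂ^d, 0)` carrying a planar normal form to `F`: by linear
algebra and the inverse function theorem, `M` extends to a biholomorphism germ of `ℂ^d`.

* If `u ≠ v`, they are linearly independent and `M (x, y) = F 0 x + F 1 y` carries the coordinate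
  axes to `F`.
* If `u = v`, then `F 1 t - F 0 t = t ^ k • q t` with `2 ≤ k` and `q 0 ≠ 0`, since the images meet
  only at the origin. Now `l u = 1` and `l (q 0) = 0`, so `u` and `q 0` are linearly independent and
  `M (x, y) = F 0 x + y • q x` carries `(t, 0)` and `(t, t ^ k)` to `F 0` and `F 1`.
-/

open scoped Topology

namespace CurveSing

/-- Pad a curve in `ℂ^d` to a curve in `ℂ^n` by appending zero coordinates. -/
def pad (d n : ℕ) (f : ℂ → Fin d → ℂ) : ℂ → Fin n → ℂ :=
  fun t j => if hj : (j : ℕ) < d then f t ⟨(j : ℕ), hj⟩ else 0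

/-- The curve `t ↦ (0,…,0,t,0,…,0)` (the `i`-th coordinate axis of `ℂ^n`). -/
def axis (n i : ℕ) : ℂ → Fin n → ℂ := fun t j => if (j : ℕ) = i then t else 0

/-- The multigerm consisting of the `n` coordinate axes of `ℂ^n`. -/
def Gn (n : ℕ) : Fin n → ℂ → Fin n → ℂ := fun i => axis n (i : ℕ)

/-- A (representative of a) curve germ in `ℂ^n`. -/
def IsCurveGerm (n : ℕ) (f : ℂ → Fin n → ℂ) : Prop :=
  AnalyticAt ℂ f 0 ∧ f 0 = 0

/-- A multigerm with `k` components in `ℂ^n`: each component is a curve germ and the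
images of sufficiently small representatives of distinct components meet only at `0`. -/
def IsMultigerm (n k : ℕ) (F : Fin k → ℂ → Fin n → ℂ) : Prop :=
  (∀ i, IsCurveGerm n (F i)) ∧
  ∃ ε > (0 : ℝ), ∀ i j : Fin k, i ≠ j → ∀ s t : ℂ,
    ‖s‖ < ε → ‖t‖ < ε → F i s = F j t → F i s = 0

/-- A germ of a biholomorphism `(E,0) → (E,0)`. -/
def IsBiholoGerm {E : Type*} [NormedAddCommGroup E] [NormedSpace ℂ E] (g : E → E) : Prop :=
  AnalyticAt ℂ g 0 ∧ g 0 = 0 ∧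
  ∃ g' : E → E, AnalyticAt ℂ g' 0 ∧ g' 0 = 0 ∧
    (∀ᶠ x in 𝓝 (0 : E), g' (g x) = x) ∧ (∀ᶠ x in 𝓝 (0 : E), g (g' x) = x)

/-- `A`-equivalence of multigerms with `k` components in `ℂ^n`. -/
def AEquiv (n k : ℕ) (F F' : Fin k → ℂ → Fin n → ℂ) : Prop :=
  ∃ g : (Fin n → ℂ) → Fin n → ℂ, IsBiholoGerm g ∧
    ∃ h : Fin k → ℂ → ℂ, (∀ i, IsBiholoGerm (h i)) ∧
      ∀ i, (fun t => g (F i t)) =ᶠ[𝓝 (0 : ℂ)] fun t => F' i (h i t)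

/-- Stable `A`-equivalence: the two multigerms become `A`-equivalent after the standard
inclusions into a common `ℂ^N`. -/
def StablyAEquiv (n n' k : ℕ) (F : Fin k → ℂ → Fin n → ℂ)
    (F' : Fin k → ℂ → Fin n' → ℂ) : Prop :=
  ∃ N, n ≤ N ∧ n' ≤ N ∧
    AEquiv N k (fun i => pad n N (F i)) (fun i => pad n' N (F' i))

/-- The `m`-jet of a curve, recorded as the tuple of iterated derivatives at `0`
of orders `0,…,m` (this determines and is determined by the degree-`m` Taylor
polynomial at `0`). -/
noncomputable def jet (n m : ℕ) (f : ℂ → Fin n → ℂ) : Fin (m + 1) → Fin n → ℂ :=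
  fun i => iteratedDeriv (i : ℕ) f 0

/-- The `m`-jet of a multigerm. -/
noncomputable def jetF (n k m : ℕ) (F : Fin k → ℂ → Fin n → ℂ) : Fin k → Fin (m + 1) → Fin n → ℂ :=
  fun i => jet n m (F i)

/-- A multigerm is simple if some neighbourhood of one of its jets meets only finitely
many `A`-equivalence classes of multigerms. -/
def Simple (n k : ℕ) (F : Fin k → ℂ → Fin n → ℂ) : Prop :=
  ∃ m : ℕ, ∃ U : Set (Fin k → Fin (m + 1) → Fin n → ℂ), IsOpen U ∧ jetF n k m F ∈ U ∧
    ∃ (N : ℕ) (R : Fin N → Fin k → ℂ → Fin n → ℂ),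
      ∀ G : Fin k → ℂ → Fin n → ℂ, IsMultigerm n k G → jetF n k m G ∈ U →
        ∃ i, AEquiv n k G (R i)

/-- A curve germ is regular if its derivative at `0` does not vanish. -/
def IsRegular (n : ℕ) (f : ℂ → Fin n → ℂ) : Prop := deriv f 0 ≠ 0

/-- `F` is stably `A`-equivalent to the pair with first component the regular curve
`(t,0,…,0)` and second component `g` (a curve in `ℂ^{d'}`). -/
def PairNF (d : ℕ) (F : Fin 2 → ℂ → Fin d → ℂ) (d' : ℕ) (g : ℂ → Fin d' → ℂ) : Prop :=
  StablyAEquiv d d' 2 F ![axis d' 0, g]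

end CurveSing

namespace CurveSing

open Filter Function

section Biholomorphisms

variable {E : Type*} [NormedAddCommGroup E] [NormedSpace ℂ E] {g h : E → E}

theorem isBiholoGerm_id : IsBiholoGerm (id : E → E) :=
  ⟨analyticAt_id, rfl, id, analyticAt_id, rfl, by simp, by simp⟩

namespace IsBiholoGerm

theorem tendsto (hg : IsBiholoGerm g) : Tendsto g (𝓝 0) (𝓝 0) := by
  simpa only [hg.2.1] using hg.1.continuousAt.tendsto

theorem comp (hg : IsBiholoGerm g) (hh : IsBiholoGerm h) : IsBiholoGerm (g ∘ h) := by
  have hht := hh.tendsto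
  obtain ⟨hga, hg0, g', hg'a, hg'0, hg'g, hgg'⟩ := hg
  obtain ⟨hha, hh0, h', hh'a, hh'0, hh'h, hhh'⟩ := hh
  have hg' : Tendsto g' (𝓝 0) (𝓝 0) := by simpa only [hg'0] using hg'a.continuousAt.tendsto
  refine ⟨.comp (by rwa [hh0]) hha, by simp [hh0, hg0], h' ∘ g', .comp (by rwa [hg'0]) hg'a,
    by simp [hg'0, hh'0], ?_, ?_⟩
  · filter_upwards [hh'h, hht.eventually hg'g] with x hx hgx
    simp only [comp_apply, hgx, hx]
  · filter_upwards [hgg', hg'.eventually hhh'] with x hx hhx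
    simp only [comp_apply, hhx, hx]

theorem exists_inverse (hg : IsBiholoGerm g) :
    ∃ g', IsBiholoGerm g' ∧ (∀ᶠ x in 𝓝 0, g' (g x) = x) ∧ ∀ᶠ x in 𝓝 0, g (g' x) = x := by
  obtain ⟨hga, hg0, g', hg'a, hg'0, hg'g, hgg'⟩ := hg
  exact ⟨g', ⟨hg'a, hg'0, g, hga, hg0, hgg', hg'g⟩, hg'g, hgg'⟩

theorem of_hasFDerivAt [CompleteSpace E] (hg : AnalyticAt ℂ g 0) (h0 : g 0 = 0) {L : E ≃L[ℂ] E}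
    (hL : HasFDerivAt g (L : E →L[ℂ] E) 0) : IsBiholoGerm g := by
  have hs : HasStrictFDerivAt g (L : E →L[ℂ] E) 0 := hL.fderiv ▸ hg.hasStrictFDerivAt
  have hinv : AnalyticAt ℂ (hs.localInverse g L 0) (g 0) :=
    (hs.toOpenPartialHomeomorph g).analyticAt_symm' hs.mem_toOpenPartialHomeomorph_source hg
      hL.fderiv
  refine ⟨hg, h0, hs.localInverse g L 0, by rwa [h0] at hinv, ?_, hs.eventually_left_inverse, ?_⟩
  · simpa only [h0] using hs.localInverse_apply_image
  · simpa only [h0] using hs.eventually_right_inverse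

theorem of_hasDerivAt {g : ℂ → ℂ} (hg : AnalyticAt ℂ g 0) (h0 : g 0 = 0) {c : ℂ} (hc : c ≠ 0)
    (hd : HasDerivAt g c 0) : IsBiholoGerm g :=
  of_hasFDerivAt hg h0 (L := .unitsEquivAut ℂ (.mk0 c hc))
    (hd.hasFDerivAt.congr_fderiv (by ext; simp))

end IsBiholoGerm

end Biholomorphisms

section Immersions

variable {V E : Type*} [NormedAddCommGroup V] [NormedSpace ℂ V] [NormedAddCommGroup E]
  [NormedSpace ℂ E]

/-- A germ of an analytic immersion `(V,0) → (E,0)`. -/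
structure IsImmersionGerm (M : V → E) : Prop where
  analyticAt : AnalyticAt ℂ M 0
  map_zero : M 0 = 0
  injective_fderiv : Injective (fderiv ℂ M 0)

theorem exists_continuousLinearEquiv_comp_eq [FiniteDimensional ℂ E] {A B : V →L[ℂ] E}
    (hA : Injective A) (hB : Injective B) : ∃ L : E ≃L[ℂ] E, (L : E →L[ℂ] E) ∘L A = B := by
  have := FiniteDimensional.of_injective A.toLinearMap hA
  let eA := LinearEquiv.ofInjective A.toLinearMap hA
  obtain ⟨L, hL⟩ := Submodule.exists_linearEquiv_restrict_eq
    (eA.symm ≪≫ₗ LinearEquiv.ofInjective B.toLinearMap hB)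
  refine ⟨L.toContinuousLinearEquiv, ContinuousLinearMap.ext fun z => ?_⟩
  simpa [eA] using (hL (eA z)).symm

/-- With `P` a left inverse of `J` and `L` a linear automorphism such that `L ∘ J` is the
differential `M'` of `M`, the map `x ↦ M (P x) + (L x - M' (P x))` has differential `L`. -/
theorem IsImmersionGerm.exists_isBiholoGerm_comp_eq [FiniteDimensional ℂ E] {M : V → E}
    (hM : IsImmersionGerm M) {J : V →L[ℂ] E} (hJ : Injective J) :
    ∃ Φ : E → E, IsBiholoGerm Φ ∧ Φ ∘ J = M := by
  have := FiniteDimensional.complete ℂ E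
  set M' := fderiv ℂ M 0
  obtain ⟨P, hPJ⟩ := ContinuousLinearMap.HasLeftInverse.of_injective_of_finiteDimensional hJ
  obtain ⟨L, hLJ⟩ := exists_continuousLinearEquiv_comp_eq hJ hM.injective_fderiv
  let R : E →L[ℂ] E := L - M' ∘L P
  have hMP : AnalyticAt ℂ M (P 0) := by simpa only [_root_.map_zero] using hM.analyticAt
  refine ⟨fun x => M (P x) + R x, .of_hasFDerivAt (L := L) ?_ ?_ ?_, funext fun z => ?_⟩
  · exact (hMP.comp (P.analyticAt 0)).add (R.analyticAt 0)
  · simp [hM.map_zero]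
  · have hM' : HasFDerivAt M M' (P 0) := by
      simpa only [_root_.map_zero] using hM.analyticAt.differentiableAt.hasFDerivAt
    exact ((hM'.comp 0 P.hasFDerivAt).add R.hasFDerivAt).congr_fderiv (by simp [R])
  · have hL : L (J z) = M' z := DFunLike.congr_fun hLJ z
    simp [R, hPJ z, hL]

theorem IsImmersionGerm.of_hasFDerivAt {ι : Type*} [Fintype ι] {M : (ι → ℂ) → E}
    (hM : AnalyticAt ℂ M 0) (h0 : M 0 = 0) {v : ι → E} (hv : LinearIndependent ℂ v)
    (hM' : HasFDerivAt M (∑ i, (ContinuousLinearMap.proj i : (ι → ℂ) →L[ℂ] ℂ).smulRight (v i)) 0) :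
    IsImmersionGerm M where
  analyticAt := hM
  map_zero := h0
  injective_fderiv := by
    rw [hM'.fderiv]
    convert hv.fintypeLinearCombination_injective using 1
    ext z
    simp [Fintype.linearCombination_apply]

theorem isImmersionGerm_sum {ι : Type*} [Fintype ι] {f : ι → ℂ → E}
    (hf : ∀ i, AnalyticAt ℂ (f i) 0) (h0 : ∀ i, f i 0 = 0)
    (hli : LinearIndependent ℂ fun i => deriv (f i) 0) :
    IsImmersionGerm fun z : ι → ℂ => ∑ i, f i (z i) := by
  let p (i : ι) : (ι → ℂ) →L[ℂ] ℂ := ContinuousLinearMap.proj i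
  refine .of_hasFDerivAt (Finset.univ.analyticAt_fun_sum fun i _ => ?_) (by simp [h0]) hli
    (.fun_sum fun i _ => ?_)
  · exact (hf i).comp (f := p i) (x := 0) ((p i).analyticAt 0)
  · refine ((hf i).differentiableAt.hasDerivAt.hasFDerivAt.comp (x := 0) (f := p i)
      (p i).hasFDerivAt).congr_fderiv ?_
    ext z
    simp [p]

theorem isImmersionGerm_add_smul {f q : ℂ → E} (hf : AnalyticAt ℂ f 0) (h0 : f 0 = 0)
    (hq : AnalyticAt ℂ q 0) (hli : LinearIndependent ℂ ![deriv f 0, q 0]) :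
    IsImmersionGerm fun z : Fin 2 → ℂ => f (z 0) + z 1 • q (z 0) := by
  let p (i : Fin 2) : (Fin 2 → ℂ) →L[ℂ] ℂ := ContinuousLinearMap.proj i
  refine .of_hasFDerivAt (.add ?_ (.smul ((p 1).analyticAt 0) ?_)) (by simp [h0]) hli ?_
  · exact hf.comp (f := p 0) (x := 0) ((p 0).analyticAt 0)
  · exact hq.comp (f := p 0) (x := 0) ((p 0).analyticAt 0)
  · have hf' := hf.differentiableAt.hasDerivAt.hasFDerivAt.comp (x := 0) (f := p 0)
      (p 0).hasFDerivAt
    have hq' := hq.differentiableAt.hasDerivAt.hasFDerivAt.comp (x := 0) (f := p 0)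
      (p 0).hasFDerivAt
    refine (hf'.add ((p 1).hasFDerivAt.smul hq')).congr_fderiv ?_
    ext z
    simp [p]

end Immersions

section Reparametrization

variable {d m k : ℕ} {F : Fin k → ℂ → Fin d → ℂ}

theorem IsCurveGerm.comp {f : ℂ → Fin d → ℂ} {h : ℂ → ℂ} (hf : IsCurveGerm d f)
    (hh : IsBiholoGerm h) : IsCurveGerm d (f ∘ h) :=
  ⟨.comp (by simpa only [hh.2.1] using hf.1) hh.1, by simp [hh.2.1, hf.2]⟩

theorem IsMultigerm.comp {h : Fin k → ℂ → ℂ} (hF : IsMultigerm d k F)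
    (hh : ∀ i, IsBiholoGerm (h i)) : IsMultigerm d k fun i => F i ∘ h i := by
  obtain ⟨hcurve, ε, hε, hmeet⟩ := hF
  have hsmall : ∀ᶠ t in 𝓝 (0 : ℂ), ∀ i, h i t ∈ Metric.ball 0 ε :=
    eventually_all.2 fun i => (hh i).tendsto (Metric.ball_mem_nhds 0 hε)
  obtain ⟨δ, hδ, hball⟩ := Metric.eventually_nhds_iff_ball.1 hsmall
  simp only [mem_ball_zero_iff] at hball
  exact ⟨fun i => (hcurve i).comp (hh i), δ, hδ, fun i j hij s t hs ht =>
    hmeet i j hij _ _ (hball s hs i) (hball t ht j)⟩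

theorem IsMultigerm.not_eventuallyEq (hF : IsMultigerm d k F) {i j : Fin k} (hij : i ≠ j)
    (hi : ¬ F i =ᶠ[𝓝 0] 0) : ¬ F i =ᶠ[𝓝 0] F j := by
  intro heq
  obtain ⟨-, ε, hε, hmeet⟩ := hF
  refine hi ?_
  filter_upwards [heq, Metric.ball_mem_nhds 0 hε] with t ht hball
  rw [mem_ball_zero_iff] at hball
  exact hmeet i j hij t t hball hball ht

theorem StablyAEquiv.of_comp {G : Fin k → ℂ → Fin m → ℂ} {h : Fin k → ℂ → ℂ}
    (hh : ∀ i, IsBiholoGerm (h i)) (hFG : StablyAEquiv d m k (fun i => F i ∘ h i) G) :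
    StablyAEquiv d m k F G := by
  obtain ⟨N, hdN, hmN, g, hg, r, hr, heq⟩ := hFG
  choose h' hh' _ hinv using fun i => (hh i).exists_inverse
  refine ⟨N, hdN, hmN, g, hg, fun i => r i ∘ h' i, fun i => (hr i).comp (hh' i), fun i => ?_⟩
  filter_upwards [(hh' i).tendsto.eventually (heq i), hinv i] with t ht hhh'
  have hpad : pad d N (F i ∘ h i) (h' i t) = pad d N (F i) t := by
    ext j
    simp only [pad, comp_apply, hhh']
  rwa [hpad] at ht

theorem IsCurveGerm.exists_isBiholoGerm_apply_comp_eq {f : ℂ → Fin d → ℂ} (hf : IsCurveGerm d f)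
    {l : (Fin d → ℂ) →L[ℂ] ℂ} (hl : l (deriv f 0) ≠ 0) :
    ∃ h, IsBiholoGerm h ∧ ∀ᶠ t in 𝓝 0, l (f (h t)) = t := by
  have hlf : IsBiholoGerm (l ∘ f) :=
    .of_hasDerivAt ((l.analyticAt _).comp hf.1) (by simp [hf.2]) hl
      (l.hasFDerivAt.comp_hasDerivAt 0 hf.1.differentiableAt.hasDerivAt)
  obtain ⟨h, hh, -, hright⟩ := hlf.exists_inverse
  exact ⟨h, hh, hright⟩

end Reparametrization

section NormalForms

variable {d m k : ℕ}

theorem pad_self (f : ℂ → Fin d → ℂ) : pad d d f = f := by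
  ext t j
  simp [pad]

theorem pad_apply_eq_extend (h : m ≤ d) (f : ℂ → Fin m → ℂ) (t : ℂ) :
    pad m d f t = extend (Fin.castLE h) (f t) 0 := by
  ext j
  by_cases hj : (j : ℕ) < m
  · simpa [pad, hj] using
      ((Fin.castLE_injective h).extend_apply (f t) 0 ⟨j, hj⟩).symm
  · rw [extend_apply' _ _ _ fun ⟨i, hi⟩ => hj (hi ▸ i.isLt)]
    simp [pad, hj]

theorem stablyAEquiv_of_isImmersionGerm {F : Fin k → ℂ → Fin d → ℂ} {G : Fin k → ℂ → Fin m → ℂ}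
    {M : (Fin m → ℂ) → Fin d → ℂ} (hM : IsImmersionGerm M)
    (hG : ∀ i, Tendsto (G i) (𝓝 0) (𝓝 0)) (hF : ∀ i, F i =ᶠ[𝓝 0] M ∘ G i) :
    StablyAEquiv d m k F G := by
  have hmd : m ≤ d := by
    simpa using LinearMap.finrank_le_finrank_of_injective (f := (fderiv ℂ M 0).toLinearMap)
      hM.injective_fderiv
  let J : (Fin m → ℂ) →L[ℂ] Fin d → ℂ :=
    LinearMap.toContinuousLinearMap (ExtendByZero.linearMap ℂ (Fin.castLE hmd))
  have hJ : Injective J := extend_injective (Fin.castLE_injective hmd) 0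
  obtain ⟨Φ, hΦ, hΦJ⟩ := hM.exists_isBiholoGerm_comp_eq hJ
  obtain ⟨Ψ, hΨ, hΨΦ, -⟩ := hΦ.exists_inverse
  refine ⟨d, le_rfl, hmd, Ψ, hΨ, fun _ => id, fun _ => isBiholoGerm_id, fun i => ?_⟩
  have hJG : Tendsto (J ∘ G i) (𝓝 0) (𝓝 0) :=
    (J.continuous.tendsto' 0 0 (map_zero J)).comp (hG i)
  filter_upwards [hF i, hJG.eventually hΨΦ] with t ht hinv
  calc Ψ (pad d d (F i) t) = Ψ (Φ (J (G i t))) := by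
        rw [pad_self, ht, ← hΦJ, comp_apply, comp_apply]
    _ = J (G i t) := hinv
    _ = pad m d (G i) t := (pad_apply_eq_extend hmd (G i) t).symm

theorem Gn_eq_single (i : Fin k) : Gn k i = Pi.single (M := fun _ => ℂ) i := by
  ext t j
  simp [Gn, axis, Pi.single_apply, Fin.ext_iff]

theorem stablyAEquiv_Gn_of_linearIndependent {F : Fin k → ℂ → Fin d → ℂ}
    (hF : ∀ i, IsCurveGerm d (F i)) (hli : LinearIndependent ℂ fun i => deriv (F i) 0) :
    StablyAEquiv d k k F (Gn k) := by
  refine stablyAEquiv_of_isImmersionGerm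
    (isImmersionGerm_sum (fun i => (hF i).1) (fun i => (hF i).2) hli) (fun i => ?_) fun i => ?_
  · rw [Gn_eq_single]
    exact (continuous_single i).tendsto' 0 0 (Pi.single_zero i)
  · refine .of_forall fun t => ?_
    rw [comp_apply, Gn_eq_single,
      Finset.sum_eq_single i (fun j _ hj => by simp [hj, (hF j).2]) (by simp), Pi.single_eq_same]

theorem Gn_two : Gn 2 = ![fun t => ![t, 0], fun t => ![(0 : ℂ), t]] := by
  ext i t j
  fin_cases i <;> fin_cases j <;> simp [Gn, axis]

theorem stablyAEquiv_of_eventuallyEq_add_pow_smul {F : Fin 2 → ℂ → Fin d → ℂ}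
    (hF : IsCurveGerm d (F 0)) {q : ℂ → Fin d → ℂ} (hq : AnalyticAt ℂ q 0)
    (hli : LinearIndependent ℂ ![deriv (F 0) 0, q 0]) (hk : k ≠ 0)
    (hFq : ∀ᶠ t in 𝓝 0, F 1 t = F 0 t + t ^ k • q t) :
    StablyAEquiv d 2 2 F ![fun t => ![t, 0], fun t => ![t, t ^ k]] := by
  refine stablyAEquiv_of_isImmersionGerm (isImmersionGerm_add_smul hF.1 hF.2 hq hli)
    (Fin.forall_fin_two.2 ⟨?_, ?_⟩) (Fin.forall_fin_two.2 ⟨?_, ?_⟩)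
  · exact (continuous_pi (Fin.forall_fin_two.2
      ⟨continuous_id, continuous_const⟩)).tendsto' 0 0 (by simp)
  · exact (continuous_pi (Fin.forall_fin_two.2
      ⟨continuous_id, continuous_pow k⟩)).tendsto' 0 0 (by simp [hk])
  · exact .of_forall fun t => by simp
  · filter_upwards [hFq] with t ht
    simpa using ht

end NormalForms

section Contact

theorem linearIndependent_pair_of_apply_eq_zero {K V : Type*} [DivisionRing K] [AddCommGroup V]
    [Module K V] {l : V →ₗ[K] K} {u v : V} (hu : l u ≠ 0) (hv : v ≠ 0) (hlv : l v = 0) :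
    LinearIndependent K ![u, v] := by
  refine LinearIndependent.pair_iff.2 fun a b hab => ?_
  have ha : a = 0 := by simpa [hu, hlv] using congrArg l hab
  exact ⟨ha, by simpa [ha, hv] using hab⟩

variable {𝕜 E : Type*} [NontriviallyNormedField 𝕜] [NormedAddCommGroup E] [NormedSpace 𝕜 E]

theorem apply_deriv_eq_one {l : E →L[𝕜] 𝕜} {f : 𝕜 → E} {z₀ : 𝕜} (hf : DifferentiableAt 𝕜 f z₀)
    (hl : ∀ᶠ t in 𝓝 z₀, l (f t) = t) : l (deriv f z₀) = 1 :=
  (l.hasFDerivAt.comp_hasDerivAt z₀ hf.hasDerivAt).unique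
    ((hasDerivAt_id z₀).congr_of_eventuallyEq hl)

theorem exists_eventuallyEq_pow_smul_apply_eq_zero {l : E →L[𝕜] 𝕜} {w : 𝕜 → E} {z₀ : 𝕜}
    (hw : AnalyticAt 𝕜 w z₀) (hw0 : analyticOrderAt w z₀ ≠ ⊤) (hl : ∀ᶠ t in 𝓝 z₀, l (w t) = 0) :
    ∃ q : 𝕜 → E, AnalyticAt 𝕜 q z₀ ∧ q z₀ ≠ 0 ∧ l (q z₀) = 0 ∧
      ∀ᶠ t in 𝓝 z₀, w t = (t - z₀) ^ analyticOrderNatAt w z₀ • q t := by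
  obtain ⟨q, hq, hq0, hwq⟩ := hw.analyticOrderAt_ne_top.1 hw0
  have hlq : (fun t => l (q t)) =ᶠ[𝓝[≠] z₀] fun _ => 0 := by
    filter_upwards [hl.filter_mono nhdsWithin_le_nhds, hwq.filter_mono nhdsWithin_le_nhds,
      self_mem_nhdsWithin] with t hlt hwt ht
    simpa [hwt, sub_ne_zero.2 ht] using hlt
  have hlq' := (ContinuousAt.eventuallyEq_nhds_iff_eventuallyEq_nhdsNE
    (l.continuous.continuousAt.comp hq.continuousAt) continuousAt_const).1 hlq
  exact ⟨q, hq, hq0, hlq'.self_of_nhds, hwq⟩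

end Contact

section Pairs

variable {d : ℕ} {F : Fin 2 → ℂ → Fin d → ℂ} {l : (Fin d → ℂ) →L[ℂ] ℂ}

theorem stablyAEquiv_axes_of_deriv_ne (hF : ∀ i, IsCurveGerm d (F i))
    (hl : ∀ i, ∀ᶠ t in 𝓝 0, l (F i t) = t) (hne : deriv (F 0) 0 ≠ deriv (F 1) 0) :
    StablyAEquiv d 2 2 F ![fun t => ![t, 0], fun t => ![(0 : ℂ), t]] := by
  have hl' i := apply_deriv_eq_one (hF i).1.differentiableAt (hl i)
  have hli : LinearIndependent ℂ ![deriv (F 0) 0, deriv (F 1) 0 - deriv (F 0) 0] :=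
    linearIndependent_pair_of_apply_eq_zero (l := l.toLinearMap) (by simp [hl'])
      (sub_ne_zero.2 hne.symm) (by simp [hl'])
  rw [← LinearIndependent.pair_add_right_iff, add_sub_cancel] at hli
  rw [← Gn_two]
  refine stablyAEquiv_Gn_of_linearIndependent hF ?_
  have hderiv : (fun i => deriv (F i) 0) = ![deriv (F 0) 0, deriv (F 1) 0] := by
    ext i : 1
    fin_cases i <;> rfl
  rwa [hderiv]

theorem exists_stablyAEquiv_of_deriv_eq (hF : ∀ i, IsCurveGerm d (F i))
    (hl : ∀ i, ∀ᶠ t in 𝓝 0, l (F i t) = t) (heq : deriv (F 0) 0 = deriv (F 1) 0)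
    (hne : ¬ F 0 =ᶠ[𝓝 0] F 1) :
    ∃ k : ℕ, 2 ≤ k ∧ StablyAEquiv d 2 2 F ![fun t => ![t, 0], fun t => ![t, t ^ k]] := by
  let w := F 1 - F 0
  have hw : AnalyticAt ℂ w 0 := (hF 1).1.sub (hF 0).1
  have hwtop : analyticOrderAt w 0 ≠ ⊤ := fun h => hne <| by
    filter_upwards [analyticOrderAt_eq_top.1 h] with t ht using (sub_eq_zero.1 ht).symm
  have hlw : ∀ᶠ t in 𝓝 0, l (w t) = 0 := by
    filter_upwards [hl 0, hl 1] with t h0 h1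
    simp [w, h0, h1]
  have hk : 2 ≤ analyticOrderNatAt w 0 := by
    have hw0 : w 0 = 0 := by simp [w, (hF _).2]
    have hw' : deriv w 0 = 0 := by
      rw [deriv_sub (hF 1).1.differentiableAt (hF 0).1.differentiableAt, heq, sub_self]
    rw [← ENat.natCast_le_natCast, Nat.cast_analyticOrderNatAt hwtop,
      natCast_le_analyticOrderAt_iff_iteratedDeriv_eq_zero hw]
    intro i hi
    interval_cases i <;> simp [hw0, hw']
  obtain ⟨q, hq, hq0, hlq, hwq⟩ := exists_eventuallyEq_pow_smul_apply_eq_zero hw hwtop hlw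
  have hl' := apply_deriv_eq_one (hF 0).1.differentiableAt (hl 0)
  refine ⟨analyticOrderNatAt w 0, hk, stablyAEquiv_of_eventuallyEq_add_pow_smul (hF 0) hq
    (linearIndependent_pair_of_apply_eq_zero (l := l.toLinearMap) (by simp [hl']) hq0 hlq)
    (by lia) ?_⟩
  filter_upwards [hwq] with t ht
  rw [← sub_eq_iff_eq_add']
  simpa [w] using ht

end Pairs

end CurveSing

open CurveSing in
/-- Any multigerm in `ℂ^n` (`n ≥ 2`) with two regular components is stably
`A`-equivalent to `((t,0),(0,t))` or to `((t,0),(t,t^k))` for some `k ≥ 2`. -/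
theorem pair_of_regular_components (d : ℕ) (hd : 2 ≤ d) (F : Fin 2 → ℂ → Fin d → ℂ)
    (hF : IsMultigerm d 2 F) (hreg : ∀ i, IsRegular d (F i)) :
    StablyAEquiv d 2 2 F ![fun t => ![t, 0], fun t => ![(0 : ℂ), t]] ∨
    ∃ k : ℕ, 2 ≤ k ∧ StablyAEquiv d 2 2 F ![fun t => ![t, 0], fun t => ![t, t ^ k]] := by
  obtain ⟨l, hl0, hl1⟩ := SeparatingDual.exists_eq_one_ne_zero_of_ne_zero_pair (R := ℂ)
    (hreg 0) (hreg 1)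
  have hl : ∀ i, l (deriv (F i) 0) ≠ 0 := Fin.forall_fin_two.2 ⟨by simp [hl0], hl1⟩
  choose h hh hlF using fun i => (hF.1 i).exists_isBiholoGerm_apply_comp_eq (hl i)
  have hG := hF.comp hh
  by_cases heq : deriv (F 0 ∘ h 0) 0 = deriv (F 1 ∘ h 1) 0
  · have hG0 : ¬ F 0 ∘ h 0 =ᶠ[𝓝 0] 0 := fun h0 => by
      simpa [h0.deriv_eq] using apply_deriv_eq_one (hG.1 0).1.differentiableAt (hlF 0)
    obtain ⟨k, hk, hequiv⟩ := exists_stablyAEquiv_of_deriv_eq hG.1 hlF heq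
      (hG.not_eventuallyEq zero_ne_one hG0)
    exact .inr ⟨k, hk, hequiv.of_comp hh⟩
  · exact .inl ((stablyAEquiv_axes_of_deriv_ne hG.1 hlF heq).of_comp hh)
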